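/- Let Ω ⊆ ℝ³ be open, ω, m ∈ ℝ, and φ_el : Ω → ℝ continuous. Let Ω̃ := {x ∈ ℝ³ : (x₁,x₂,−x₃) ∈ Ω}. For a differentiable Φ : Ω → ℂ⁴ define F : Ω̃ → ℍ(ℂ) by F = F₀ + F₁e₁ + F₂e₂ + F₃e₃ with F₀(x) = −½(Φ̃₁(x) − Φ̃₂(x)), F₁(x) = (i/2)(Φ̃₀(x) − Φ̃₃(x)), F₂(x) = −½(Φ̃₀(x) + Φ̃₃(x)), F₃(x) = (i/2)(Φ̃₁(x) + Φ̃₂(x)), where Φ̃(x) := Φ(x₁,x₂,−x₃). Then Φ satisfies the Dirac equation with electric potential, i(ω + φ_el)γ₀Φ + γ₁∂₁Φ + γ₂∂₂Φ + γ₃∂₃Φ + imΦ = 0 on Ω, if and only if F satisfies DF + F·α_el = 0 on Ω̃, where α_el(x) = −(i(ω + φ_el(x₁,x₂,−x₃)) e₁ + m e₂). -/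

import Mathlib

noncomputable section

abbrev HC := Quaternion ℂ

def e1 : HC := ⟨0, 1, 0, 0⟩
def e2 : HC := ⟨0, 0, 1, 0⟩
def e3 : HC := ⟨0, 0, 0, 1⟩

def pd (k : Fin 3) (g : (Fin 3 → ℝ) → ℂ) (x : Fin 3 → ℝ) : ℂ :=
  fderiv ℝ g x (Pi.single k 1)

def lap (g : (Fin 3 → ℝ) → ℂ) (x : Fin 3 → ℝ) : ℂ :=
  pd 0 (pd 0 g) x + pd 1 (pd 1 g) x + pd 2 (pd 2 g) x

def pdq (k : Fin 3) (f : (Fin 3 → ℝ) → HC) (x : Fin 3 → ℝ) : HC :=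
  ⟨pd k (fun y => (f y).re) x, pd k (fun y => (f y).imI) x,
   pd k (fun y => (f y).imJ) x, pd k (fun y => (f y).imK) x⟩

def Dq (f : (Fin 3 → ℝ) → HC) (x : Fin 3 → ℝ) : HC :=
  e1 * pdq 0 f x + e2 * pdq 1 f x + e3 * pdq 2 f x

def lapq (f : (Fin 3 → ℝ) → HC) (x : Fin 3 → ℝ) : HC :=
  ⟨lap (fun y => (f y).re) x, lap (fun y => (f y).imI) x,
   lap (fun y => (f y).imJ) x, lap (fun y => (f y).imK) x⟩

def QDiffOn (f : (Fin 3 → ℝ) → HC) (Ω : Set (Fin 3 → ℝ)) : Prop :=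
  DifferentiableOn ℝ (fun y => (f y).re) Ω ∧ DifferentiableOn ℝ (fun y => (f y).imI) Ω ∧
  DifferentiableOn ℝ (fun y => (f y).imJ) Ω ∧ DifferentiableOn ℝ (fun y => (f y).imK) Ω

def QC2On (f : (Fin 3 → ℝ) → HC) (Ω : Set (Fin 3 → ℝ)) : Prop :=
  ContDiffOn ℝ 2 (fun y => (f y).re) Ω ∧ ContDiffOn ℝ 2 (fun y => (f y).imI) Ω ∧
  ContDiffOn ℝ 2 (fun y => (f y).imJ) Ω ∧ ContDiffOn ℝ 2 (fun y => (f y).imK) Ω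


open Matrix in
/-- The γ-matrices in the standard Dirac representation. -/
def γ0 : Matrix (Fin 4) (Fin 4) ℂ := !![1,0,0,0; 0,1,0,0; 0,0,-1,0; 0,0,0,-1]
open Matrix in
def γ1 : Matrix (Fin 4) (Fin 4) ℂ := !![0,0,0,1; 0,0,1,0; 0,-1,0,0; -1,0,0,0]
open Matrix in
def γ2 : Matrix (Fin 4) (Fin 4) ℂ :=
  !![0,0,0,-Complex.I; 0,0,Complex.I,0; 0,Complex.I,0,0; -Complex.I,0,0,0]
open Matrix in
def γ3 : Matrix (Fin 4) (Fin 4) ℂ := !![0,0,1,0; 0,0,0,-1; -1,0,0,0; 0,1,0,0]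

/-- Componentwise partial derivative of a `ℂ⁴`-valued function. -/
def pdv (k : Fin 3) (Φ : (Fin 3 → ℝ) → (Fin 4 → ℂ)) (x : Fin 3 → ℝ) : Fin 4 → ℂ :=
  fun j => pd k (fun y => Φ y j) x

/-- The reflection `x ↦ (x₁, x₂, −x₃)`. -/
def refl3 (x : Fin 3 → ℝ) : Fin 3 → ℝ := ![x 0, x 1, -x 2]

/-- The transform `F = 𝒜[Φ]` of the paper (with `Φ̃(x) = Φ(x₁,x₂,−x₃)`). -/
def AF (Φ : (Fin 3 → ℝ) → (Fin 4 → ℂ)) (x : Fin 3 → ℝ) : HC :=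
  ⟨-(Φ (refl3 x) 1 - Φ (refl3 x) 2) / 2,
   Complex.I * (Φ (refl3 x) 0 - Φ (refl3 x) 3) / 2,
   -(Φ (refl3 x) 0 + Φ (refl3 x) 3) / 2,
   Complex.I * (Φ (refl3 x) 1 + Φ (refl3 x) 2) / 2⟩

/-!
The linear isomorphism `T : ℂ⁴ → ℍ(ℂ)` underlying `𝒜` turns multiplication by `γ₁γ₂γ₃γₖ`,
`k = 1, 2, 3`, into left multiplication by `e₁`, `e₂`, `-e₃`, and multiplication by `γ₁γ₂γ₃γ₀` and
`iγ₁γ₂γ₃` into right multiplication by `-e₁` and `-e₂`. The sign at `e₃` is the one that `∂₃` picks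
up under the reflection `x ↦ (x₁, x₂, -x₃)`. Hence `D_α 𝒜 = 𝒜 γ₁γ₂γ₃ 𝒟`, where `𝒟` is the Dirac
operator, and `γ₁γ₂γ₃` is an involution.
-/

section Derivatives

theorem pd_linearMap_comp {ι : Type*} [Finite ι] (L : (ι → ℂ) →ₗ[ℝ] ℂ)
    {V : (Fin 3 → ℝ) → ι → ℂ} {x : Fin 3 → ℝ}
    (hV : ∀ j, DifferentiableAt ℝ (fun y => V y j) x) (k : Fin 3) :
    pd k (fun y => L (V y)) x = L (fun j => pd k (fun y => V y j) x) := by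
  cases nonempty_fintype ι
  have hcomp : HasFDerivAt (fun y => L (V y))
      (L.toContinuousLinearMap.comp (.pi fun j => fderiv ℝ (fun y => V y j) x)) x :=
    L.toContinuousLinearMap.hasFDerivAt.comp x
      (hasFDerivAt_pi.2 fun j => (hV j).hasFDerivAt)
  exact congrArg (· (Pi.single k 1)) hcomp.fderiv

theorem pdq_linearMap_comp (T : (Fin 4 → ℂ) →ₗ[ℝ] HC)
    {V : (Fin 3 → ℝ) → Fin 4 → ℂ} {x : Fin 3 → ℝ}
    (hV : ∀ j, DifferentiableAt ℝ (fun y => V y j) x) (k : Fin 3) :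
    pdq k (fun y => T (V y)) x = T (pdv k V x) := by
  ext
  · exact pd_linearMap_comp ((QuaternionAlgebra.reₗ _ _ _).restrictScalars ℝ ∘ₗ T) hV k
  · exact pd_linearMap_comp ((QuaternionAlgebra.imIₗ _ _ _).restrictScalars ℝ ∘ₗ T) hV k
  · exact pd_linearMap_comp ((QuaternionAlgebra.imJₗ _ _ _).restrictScalars ℝ ∘ₗ T) hV k
  · exact pd_linearMap_comp ((QuaternionAlgebra.imKₗ _ _ _).restrictScalars ℝ ∘ₗ T) hV k

theorem refl3_involutive : Function.Involutive refl3 := fun x => by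
  ext i; fin_cases i <;> simp [refl3]

/-- The reflection `refl3` as a continuous linear automorphism of `ℝ³`, for use with the
chain rule. -/
def refl3Equiv : (Fin 3 → ℝ) ≃L[ℝ] (Fin 3 → ℝ) :=
  (LinearEquiv.ofInvolutive
    { toFun := refl3
      map_add' := fun x y => by ext i; fin_cases i <;> simp [refl3, add_comm]
      map_smul' := fun c x => by ext i; fin_cases i <;> simp [refl3] }
    refl3_involutive).toContinuousLinearEquiv

theorem refl3_single (k : Fin 3) :
    refl3 (Pi.single k 1) = (if k = 2 then -1 else 1 : ℝ) • Pi.single k 1 := by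
  ext i; fin_cases k <;> fin_cases i <;> simp [refl3]

theorem pd_comp_refl3 (g : (Fin 3 → ℝ) → ℂ) (k : Fin 3) (x : Fin 3 → ℝ) :
    pd k (fun y => g (refl3 y)) x = (if k = 2 then -1 else 1) * pd k g (refl3 x) := by
  have hchain : pd k (fun y => g (refl3 y)) x = fderiv ℝ g (refl3 x) (refl3 (Pi.single k 1)) :=
    congrArg (· (Pi.single k 1)) (refl3Equiv.comp_right_fderiv (f := g) (x := x))
  rw [hchain, refl3_single, map_smul, Complex.real_smul, pd]
  split_ifs <;> simp

theorem pdv_comp_refl3 (Φ : (Fin 3 → ℝ) → Fin 4 → ℂ) (k : Fin 3) (x : Fin 3 → ℝ) :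
    pdv k (fun y => Φ (refl3 y)) x = (if k = 2 then -1 else 1 : ℂ) • pdv k Φ (refl3 x) :=
  funext fun j => pd_comp_refl3 (fun y => Φ y j) k x

end Derivatives

section Dirac

open Matrix

attribute [simps] e1 e2 e3

/-- The pointwise map `T : ℂ⁴ → ℍ(ℂ)` of the transform `𝒜`, so that `𝒜[Φ] = T ∘ Φ̃`. -/
@[simps]
def spinorToQuaternion (v : Fin 4 → ℂ) : HC :=
  ⟨-(v 1 - v 2) / 2, Complex.I * (v 0 - v 3) / 2,
   -(v 0 + v 3) / 2, Complex.I * (v 1 + v 2) / 2⟩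

/-- The map `spinorToQuaternion` as a linear isomorphism. -/
def spinorEquiv : (Fin 4 → ℂ) ≃ₗ[ℂ] HC where
  toFun := spinorToQuaternion
  invFun q := ![-q.imJ - Complex.I * q.imI, -q.re - Complex.I * q.imK,
    q.re - Complex.I * q.imK, -q.imJ + Complex.I * q.imI]
  map_add' v w := by ext <;> simp <;> ring
  map_smul' c v := by ext <;> simp <;> ring
  left_inv v := by ext j; fin_cases j <;> simp <;> grind [Complex.I_mul_I]
  right_inv q := by ext <;> simp <;> grind [Complex.I_mul_I]

@[simp]
theorem spinorEquiv_apply (v : Fin 4 → ℂ) : spinorEquiv v = spinorToQuaternion v := rfl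

theorem γ0_mulVec (v : Fin 4 → ℂ) : γ0 *ᵥ v = ![v 0, v 1, -v 2, -v 3] := by
  ext j; fin_cases j <;> simp [γ0, mulVec, dotProduct, Fin.sum_univ_four]

theorem γ1_mulVec (v : Fin 4 → ℂ) : γ1 *ᵥ v = ![v 3, v 2, -v 1, -v 0] := by
  ext j; fin_cases j <;> simp [γ1, mulVec, dotProduct, Fin.sum_univ_four]

theorem γ2_mulVec (v : Fin 4 → ℂ) :
    γ2 *ᵥ v = Complex.I • ![-v 3, v 2, v 1, -v 0] := by
  ext j; fin_cases j <;> simp [γ2, mulVec, dotProduct, Fin.sum_univ_four]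

theorem γ3_mulVec (v : Fin 4 → ℂ) : γ3 *ᵥ v = ![v 2, -v 3, -v 0, v 1] := by
  ext j; fin_cases j <;> simp [γ3, mulVec, dotProduct, Fin.sum_univ_four]

/-- The product `γ₁γ₂γ₃` of the spatial γ-matrices. -/
def γ123 : Matrix (Fin 4) (Fin 4) ℂ := γ1 * γ2 * γ3

theorem γ123_mulVec (v : Fin 4 → ℂ) :
    γ123 *ᵥ v = Complex.I • ![-v 2, -v 3, v 0, v 1] := by
  simp only [γ123, ← mulVec_mulVec, γ1_mulVec, γ2_mulVec, γ3_mulVec]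
  ext j; fin_cases j <;> simp

theorem γ123_mulVec_involutive : Function.Involutive (γ123 *ᵥ ·) := fun v => by
  ext j; fin_cases j <;> simp [γ123_mulVec, ← mul_assoc]

theorem e1_mul_spinorEquiv (v : Fin 4 → ℂ) :
    e1 * spinorEquiv v = spinorEquiv (γ123 *ᵥ γ1 *ᵥ v) := by
  ext <;> simp [γ123_mulVec, γ1_mulVec] <;> grind [Complex.I_mul_I]

theorem e2_mul_spinorEquiv (v : Fin 4 → ℂ) :
    e2 * spinorEquiv v = spinorEquiv (γ123 *ᵥ γ2 *ᵥ v) := by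
  ext <;> simp [γ123_mulVec, γ2_mulVec] <;> grind [Complex.I_mul_I]

theorem e3_mul_spinorEquiv (v : Fin 4 → ℂ) :
    e3 * spinorEquiv v = -spinorEquiv (γ123 *ᵥ γ3 *ᵥ v) := by
  ext <;> simp [γ123_mulVec, γ3_mulVec] <;> grind [Complex.I_mul_I]

theorem spinorEquiv_mul_e1 (v : Fin 4 → ℂ) :
    spinorEquiv v * e1 = -spinorEquiv (γ123 *ᵥ γ0 *ᵥ v) := by
  ext <;> simp [γ123_mulVec, γ0_mulVec] <;> grind [Complex.I_mul_I]

theorem spinorEquiv_mul_e2 (v : Fin 4 → ℂ) :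
    spinorEquiv v * e2 = -Complex.I • spinorEquiv (γ123 *ᵥ v) := by
  ext <;> simp [γ123_mulVec] <;> grind [Complex.I_mul_I]

theorem spinorEquiv_γ123_mulVec_eq_zero {v : Fin 4 → ℂ} :
    spinorEquiv (γ123 *ᵥ v) = 0 ↔ v = 0 := by
  rw [LinearEquiv.map_eq_zero_iff]
  exact γ123_mulVec_involutive.injective.eq_iff' (mulVec_zero _)

/-- The Dirac operator `𝒟Φ = i(ω + φ)γ₀Φ + Σ γₖ∂ₖΦ + imΦ` with electric potential `φ`;
the frequency, mass and potential may be complex. -/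
def diracElectric (ω m : ℂ) (φ : (Fin 3 → ℝ) → ℂ) (Φ : (Fin 3 → ℝ) → Fin 4 → ℂ)
    (x : Fin 3 → ℝ) : Fin 4 → ℂ :=
  (Complex.I * (ω + φ x)) • γ0 *ᵥ Φ x + γ1 *ᵥ pdv 0 Φ x + γ2 *ᵥ pdv 1 Φ x + γ3 *ᵥ pdv 2 Φ x +
    (Complex.I * m) • Φ x

/-- The quaternionic potential `α_el = -(i(ω + φ̃)e₁ + me₂)`, where `φ̃` is the reflected `φ`. -/
def electricAlpha (ω m : ℂ) (φ : (Fin 3 → ℝ) → ℂ) (x : Fin 3 → ℝ) : HC :=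
  -((Complex.I * (ω + φ (refl3 x))) • e1 + m • e2)

theorem AF_eq_spinorEquiv (Φ : (Fin 3 → ℝ) → Fin 4 → ℂ) (x : Fin 3 → ℝ) :
    AF Φ x = spinorEquiv (Φ (refl3 x)) := rfl

theorem pdq_AF {Φ : (Fin 3 → ℝ) → Fin 4 → ℂ} {x : Fin 3 → ℝ}
    (hΦ : ∀ j, DifferentiableAt ℝ (fun y => Φ y j) (refl3 x)) (k : Fin 3) :
    pdq k (AF Φ) x = spinorEquiv ((if k = 2 then -1 else 1 : ℂ) • pdv k Φ (refl3 x)) := by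
  have hrefl : ∀ j, DifferentiableAt ℝ (fun y => Φ (refl3 y) j) x := fun j =>
    (hΦ j).comp x refl3Equiv.differentiableAt
  rw [← pdv_comp_refl3]
  exact pdq_linearMap_comp (spinorEquiv.toLinearMap.restrictScalars ℝ) hrefl k

theorem Dq_AF {Φ : (Fin 3 → ℝ) → Fin 4 → ℂ} {x : Fin 3 → ℝ}
    (hΦ : ∀ j, DifferentiableAt ℝ (fun y => Φ y j) (refl3 x)) :
    Dq (AF Φ) x = spinorEquiv (γ123 *ᵥ (γ1 *ᵥ pdv 0 Φ (refl3 x) +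
      γ2 *ᵥ pdv 1 Φ (refl3 x) + γ3 *ᵥ pdv 2 Φ (refl3 x))) := by
  rw [Dq, pdq_AF hΦ, pdq_AF hΦ, pdq_AF hΦ, e1_mul_spinorEquiv, e2_mul_spinorEquiv,
    e3_mul_spinorEquiv]
  simp only [Fin.reduceEq, if_false, if_true, one_smul, neg_smul, mulVec_neg, mulVec_add, map_neg,
    map_add, neg_neg]

theorem AF_mul_electricAlpha (ω m : ℂ) (φ : (Fin 3 → ℝ) → ℂ) (Φ : (Fin 3 → ℝ) → Fin 4 → ℂ)
    (x : Fin 3 → ℝ) :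
    AF Φ x * electricAlpha ω m φ x =
      spinorEquiv (γ123 *ᵥ ((Complex.I * (ω + φ (refl3 x))) • γ0 *ᵥ Φ (refl3 x) +
        (Complex.I * m) • Φ (refl3 x))) := by
  rw [electricAlpha, AF_eq_spinorEquiv, ← neg_mul_eq_mul_neg (spinorEquiv _), mul_add,
    Algebra.mul_smul_comm _ (spinorEquiv _) e1, Algebra.mul_smul_comm _ (spinorEquiv _) e2,
    spinorEquiv_mul_e1, spinorEquiv_mul_e2]
  simp only [mulVec_add, mulVec_smul, map_add, map_smul]
  module

theorem Dq_AF_add_AF_mul_electricAlpha (ω m : ℂ) (φ : (Fin 3 → ℝ) → ℂ)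
    {Φ : (Fin 3 → ℝ) → Fin 4 → ℂ} {x : Fin 3 → ℝ}
    (hΦ : ∀ j, DifferentiableAt ℝ (fun y => Φ y j) (refl3 x)) :
    Dq (AF Φ) x + AF Φ x * electricAlpha ω m φ x =
      spinorEquiv (γ123 *ᵥ diracElectric ω m φ Φ (refl3 x)) := by
  rw [Dq_AF hΦ, AF_mul_electricAlpha, ← map_add, ← mulVec_add, diracElectric]
  congr 2
  abel

end Dirac

theorem dirac_electric_potential_equiv_general {Ω : Set (Fin 3 → ℝ)} (ω m : ℂ)
    (φ : (Fin 3 → ℝ) → ℂ) {Φ : (Fin 3 → ℝ) → Fin 4 → ℂ}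
    (hΦ : ∀ x ∈ Ω, ∀ j, DifferentiableAt ℝ (fun y => Φ y j) x) :
    (∀ x ∈ Ω, diracElectric ω m φ Φ x = 0) ↔
      ∀ x, refl3 x ∈ Ω → Dq (AF Φ) x + AF Φ x * electricAlpha ω m φ x = 0 := by
  rw [refl3_involutive.surjective.forall]
  refine forall₂_congr fun x hx => ?_
  rw [Dq_AF_add_AF_mul_electricAlpha ω m φ (hΦ _ hx),
    spinorEquiv_γ123_mulVec_eq_zero]

/-- the Dirac equation with electric potential
`i(ω + φ_el)γ₀Φ + Σ γ_k ∂_kΦ + imΦ = 0` on `Ω` is equivalent, under the transform `F = 𝒜[Φ]`,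
to `DF + F·α_el = 0` on `Ω̃`, with `α_el = −(i(ω + φ̃_el) e₁ + m e₂)`. -/
theorem dirac_electric_potential_equiv
    (Ω : Set (Fin 3 → ℝ)) (hΩ : IsOpen Ω) (ω m : ℝ)
    (φel : (Fin 3 → ℝ) → ℝ) (hφ : ContinuousOn φel Ω)
    (Φ : (Fin 3 → ℝ) → (Fin 4 → ℂ))
    (hΦ : ∀ j : Fin 4, DifferentiableOn ℝ (fun y => Φ y j) Ω) :
    (∀ x ∈ Ω,
        (Complex.I * ((ω : ℂ) + (φel x : ℂ))) • γ0.mulVec (Φ x) + γ1.mulVec (pdv 0 Φ x) +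
          γ2.mulVec (pdv 1 Φ x) + γ3.mulVec (pdv 2 Φ x) +
          (Complex.I * (m : ℂ)) • Φ x = 0) ↔
    (∀ x, refl3 x ∈ Ω →
        Dq (AF Φ) x + AF Φ x *
          (-((Complex.I * ((ω : ℂ) + (φel (refl3 x) : ℂ))) • e1 + (m : ℂ) • e2)) = 0) :=
  dirac_electric_potential_equiv_general ω m (fun x => φel x) fun _ hx j =>
    (hΦ j).differentiableAt (hΩ.mem_nhds hx)
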